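/- arXiv:2506.18549 — 3 statements merged into one kernel-verified Lean document; each statement's English description precedes it below -/
import Mathlib

section
/- Let n and c be natural numbers with c ≤ n. A partition P of ZMod (2^n) with exactly 2^c blocks is shift-invariant if and only if P is the residue-class partition modulo 2^c, i.e. the blocks of P are exactly the fibers of the reduction ring homomorphism ZMod (2^n) → ZMod (2^c) (equivalently, the sets {x : ZMod (2^n) | the reduction of x mod 2^c equals μ} for μ ranging over ZMod (2^c)). -/
/-!
The additive group `ZMod (2 ^ n)` acts on its subsets by translation. If `P` is shift-invariant, it
is invariant under all translations, so `P` is the orbit of the block `B` containing `0`, and `B` is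
the underlying set of its own stabilizer `H`. By orbit-stabilizer `H` has index `2 ^ c`, so it
contains every multiple of `2 ^ c`, i.e. the kernel of the reduction modulo `2 ^ c`. That kernel has
the same index, so it equals `H`, and the blocks, being the cosets of `H`, are the fibers of the
reduction. Conversely, the shift sends the fiber over `μ` to the fiber over `μ + 1`.
-/

open scoped Pointwise

/-- The kernel of the reduction is the only subgroup of `ZMod (2 ^ n)` of index `2 ^ c`. -/
lemma ker_castHom_eq_of_index (n c : ℕ) (hc : c ≤ n) (H : AddSubgroup (ZMod (2 ^ n)))
    (hH : H.index = 2 ^ c) :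
    (ZMod.castHom (pow_dvd_pow 2 hc) (ZMod (2 ^ c))).toAddMonoidHom.ker = H := by
  set φ := (ZMod.castHom (pow_dvd_pow 2 hc) (ZMod (2 ^ c))).toAddMonoidHom with hφ
  have hsurj : Function.Surjective φ := ZMod.castHom_surjective (pow_dvd_pow 2 hc)
  have hKi : φ.ker.index = 2 ^ c := by
    rw [AddSubgroup.index_ker, AddMonoidHom.range_eq_top.mpr hsurj]
    simp
  have hle : φ.ker ≤ H := by
    intro x hx
    have hx0 : ZMod.castHom (pow_dvd_pow 2 hc) (ZMod (2 ^ c)) x = 0 := hx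
    rw [← ZMod.natCast_zmod_val x, map_natCast, ZMod.natCast_eq_zero_iff] at hx0
    obtain ⟨k, hk⟩ := hx0
    have hmem := H.nsmul_index_mem (k : ZMod (2 ^ n))
    rw [hH, nsmul_eq_mul, ← Nat.cast_mul, ← hk, ZMod.natCast_zmod_val] at hmem
    exact hmem
  refine AddSubgroup.eq_of_le_of_card_ge hle (le_of_eq ?_)
  have h1 := H.card_mul_index
  have h2 := φ.ker.card_mul_index
  rw [hH] at h1
  rw [hKi] at h2
  exact Nat.eq_of_mul_eq_mul_right (by positivity) (h1.trans h2.symm)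

/-- A partition of `ZMod (2^n)` with exactly `2^c` blocks is shift-invariant
iff it is the residue-class partition modulo `2^c`, i.e. its blocks are exactly
the fibers of the reduction homomorphism `ZMod (2^n) → ZMod (2^c)`. -/
theorem shift_invariant_partition_iff_residue_classes
    (n c : ℕ) (hc : c ≤ n)
    (P : Set (Set (ZMod (2 ^ n)))) (hP : Setoid.IsPartition P)
    (hcard : P.ncard = 2 ^ c) :
    (∀ A ∈ P, (fun x => x + 1) '' A ∈ P) ↔
      P = Set.range (fun μ : ZMod (2 ^ c) =>
        {x : ZMod (2 ^ n) |
          ZMod.castHom (pow_dvd_pow 2 hc) (ZMod (2 ^ c)) x = μ}) := by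
  constructor
  · intro hS
    have huniq : ∀ {A A' : Set (ZMod (2 ^ n))} {x}, A ∈ P → A' ∈ P → x ∈ A → x ∈ A' → A = A' :=
      fun hA hA' hx hx' => (hP.2 _).unique ⟨hA, hx⟩ ⟨hA', hx'⟩
    have hnat : ∀ m : ℕ, ∀ A ∈ P, (m : ZMod (2 ^ n)) +ᵥ A ∈ P := by
      intro m
      induction m with
      | zero => intro A hA; simpa using hA
      | succ m ih =>
        intro A hA
        have h := hS _ (ih A hA)
        have he : ((m + 1 : ℕ) : ZMod (2 ^ n)) +ᵥ A
            = (fun x => x + 1) '' ((m : ZMod (2 ^ n)) +ᵥ A) := by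
          rw [Nat.cast_add, Nat.cast_one, add_comm, add_vadd]
          simp only [← Set.image_vadd, vadd_eq_add, add_comm]
        rwa [he]
    have htrans : ∀ (x : ZMod (2 ^ n)), ∀ A ∈ P, x +ᵥ A ∈ P := by
      intro x A hA
      have h := hnat x.val A hA
      rwa [ZMod.natCast_zmod_val] at h
    obtain ⟨B, ⟨hB, h0⟩, -⟩ := hP.2 0
    have hself : ∀ x : ZMod (2 ^ n), x ∈ x +ᵥ B := fun x => by
      simpa using Set.vadd_mem_vadd_set (a := x) h0
    have horbit : P = AddAction.orbit (ZMod (2 ^ n)) B := by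
      ext A
      constructor
      · intro hA
        obtain ⟨x, hx⟩ := Setoid.nonempty_of_mem_partition hP hA
        exact ⟨x, huniq (htrans x B hB) hA (hself x) hx⟩
      · rintro ⟨x, rfl⟩
        exact htrans x B hB
    have hker := ker_castHom_eq_of_index n c hc (AddAction.stabilizer (ZMod (2 ^ n)) B)
      (by rw [AddAction.index_stabilizer, ← horbit, hcard])
    have hmemB : ∀ x : ZMod (2 ^ n), x ∈ B ↔
        ZMod.castHom (pow_dvd_pow 2 hc) (ZMod (2 ^ c)) x = 0 := by
      intro x
      have h1 : ZMod.castHom (pow_dvd_pow 2 hc) (ZMod (2 ^ c)) x = 0 ↔ x +ᵥ B = B := by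
        rw [← AddAction.mem_stabilizer_iff, ← hker]
        rfl
      rw [h1]
      exact ⟨fun hx => huniq (htrans x B hB) hB (hself x) hx, fun h => h ▸ hself x⟩
    have hcoset : ∀ x : ZMod (2 ^ n), x +ᵥ B =
        {y | ZMod.castHom (pow_dvd_pow 2 hc) (ZMod (2 ^ c)) y =
          ZMod.castHom (pow_dvd_pow 2 hc) (ZMod (2 ^ c)) x} := by
      intro x
      ext y
      rw [Set.mem_vadd_set_iff_neg_vadd_mem, hmemB, vadd_eq_add, map_add, map_neg,
        neg_add_eq_zero, Set.mem_setOf_eq, eq_comm]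
    rw [horbit]
    ext A
    constructor
    · rintro ⟨x, rfl⟩
      exact ⟨_, (hcoset x).symm⟩
    · rintro ⟨μ, rfl⟩
      obtain ⟨x, rfl⟩ := ZMod.castHom_surjective (pow_dvd_pow 2 hc) μ
      exact ⟨x, hcoset x⟩
  · rintro rfl A ⟨μ, rfl⟩
    refine ⟨μ + 1, ?_⟩
    ext x
    simp only [Set.mem_setOf_eq, Set.mem_image]
    constructor
    · intro hx
      exact ⟨x - 1, by rw [map_sub, hx, map_one, add_sub_cancel_right], sub_add_cancel x 1⟩
    · rintro ⟨y, hy, rfl⟩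
      rw [map_add, hy, map_one]
end

section
/- Let P be a shift-invariant partition of ZMod N (0 < N) with exactly K blocks. Then for every block A of P: (i) A + K = A; (ii) A + m ≠ A for every m with 0 < m < K (so K is the minimal positive period of each block under the shift); and (iii) K divides N. -/
/-!
The shift acts on sets by `T A = A + 1`, so that `T^[m] A = A + m`. Since the shift is transitive
on points, and a block of a partition is determined by any one of its points, the `T`-orbit of a
block `A` is all of `P`. As `T^[N] A = A`, this orbit has exactly `Function.minimalPeriod T A`
elements; hence `K` is the minimal period of `A`, and it divides the period `N`.
-/

lemma iterate_image_add_one {N : ℕ} (A : Set (ZMod N)) (m : ℕ) :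
    (Set.image (fun x : ZMod N => x + 1))^[m] A = (fun x => x + (m : ZMod N)) '' A := by
  induction m with
  | zero => simp
  | succ m ih =>
    rw [Function.iterate_succ_apply', ih, Set.image_image]
    simp only [Nat.cast_succ, add_assoc]

/-- The set of all iterates of a periodic point has as many elements as the minimal period. -/
lemma ncard_range_iterate {α : Type*} (f : α → α) (x : α) (hx : x ∈ Function.periodicPts f) :
    (Set.range fun m => f^[m] x).ncard = Function.minimalPeriod f x := by
  have hpos := Function.minimalPeriod_pos_of_mem_periodicPts hx
  have hrange : (Set.range fun m => f^[m] x)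
      = (fun m => f^[m] x) '' Set.Iio (Function.minimalPeriod f x) := by
    ext y
    constructor
    · rintro ⟨m, rfl⟩
      exact ⟨m % Function.minimalPeriod f x, Nat.mod_lt _ hpos,
        Function.iterate_mod_minimalPeriod_eq⟩
    · rintro ⟨m, -, rfl⟩
      exact ⟨m, rfl⟩
  rw [hrange, Set.InjOn.ncard_image Function.iterate_injOn_Iio_minimalPeriod,
    ← Finset.coe_Iio, Set.ncard_coe_finset, Nat.card_Iio]

/-- For a shift-invariant partition of `ZMod N` with exactly `K` blocks:
each block has minimal positive period `K` under the shift, and `K ∣ N`. -/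
theorem shift_invariant_partition_period
    (N K : ℕ) (hN : 0 < N)
    (P : Set (Set (ZMod N))) (hP : Setoid.IsPartition P)
    (hshift : ∀ A ∈ P, (fun x => x + 1) '' A ∈ P)
    (hK : P.ncard = K) :
    ∀ A ∈ P,
      ((fun x => x + (K : ZMod N)) '' A = A) ∧
      (∀ m : ℕ, 0 < m → m < K → (fun x => x + (m : ZMod N)) '' A ≠ A) ∧
      K ∣ N := by
  intro A hA
  haveI : NeZero N := ⟨hN.ne'⟩
  set T : Set (ZMod N) → Set (ZMod N) := Set.image (fun x => x + 1) with hT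
  have hiter : ∀ m : ℕ, T^[m] A = (fun x => x + (m : ZMod N)) '' A := iterate_image_add_one A
  have hperN : Function.IsPeriodicPt T N A := by
    change T^[N] A = A
    rw [hiter]
    simp
  have hmem : ∀ m : ℕ, T^[m] A ∈ P := by
    intro m
    induction m with
    | zero => exact hA
    | succ m ih =>
      rw [Function.iterate_succ_apply']
      exact hshift _ ih
  have horbit : (Set.range fun m => T^[m] A) = P := by
    ext B
    constructor
    · rintro ⟨m, rfl⟩
      exact hmem m
    · intro hB
      obtain ⟨a, ha⟩ := Setoid.nonempty_of_mem_partition hP hA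
      obtain ⟨b, hb⟩ := Setoid.nonempty_of_mem_partition hP hB
      -- Translating `A` by `b - a` gives a block that meets `B` in `b`.
      refine ⟨(b - a).val, ?_⟩
      have hb' : b ∈ T^[(b - a).val] A := by
        rw [hiter]
        exact ⟨a, ha, by simp⟩
      exact (hP.2 b).unique ⟨hmem _, hb'⟩ ⟨hB, hb⟩
  have hmin : Function.minimalPeriod T A = K := by
    rw [← ncard_range_iterate T A ⟨N, hN, hperN⟩, horbit, hK]
  refine ⟨?_, ?_, ?_⟩
  · rw [← hiter, ← hmin]
    exact Function.iterate_minimalPeriod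
  · intro m hm hmK h
    rw [← hiter] at h
    rw [← hmin] at hmK
    exact Function.not_isPeriodicPt_of_pos_of_lt_minimalPeriod hm.ne' hmK h
  · rw [← hmin]
    exact hperN.minimalPeriod_dvd
end

section
/- Let f, g : ℝ → ℝ be differentiable functions such that (deriv f x)^2 = (deriv g x)^2 for every x ∈ ℝ and deriv g x ≠ 0 for every x ∈ ℝ. Then either deriv f x = deriv g x for all x, or deriv f x = −(deriv g x) for all x; consequently there exists a constant C such that f = g + C everywhere or f = −g + C everywhere. -/
/-!
By Darboux's theorem a derivative has the intermediate value property even when it is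
discontinuous, so a derivative that never vanishes has constant sign. This applies to `g'`, and
also to `f'`, since `f' ^ 2 = g' ^ 2 ≠ 0`. Pointwise `f' = g'` or `f' = -g'`, and the two constant
signs decide which alternative holds, uniformly in `x`. The constant then comes from `f - g` or
`f + g` having zero derivative.
-/

/-- Darboux's theorem for derivatives on the whole line that avoid the value `0`. -/
lemma deriv_neg_or_pos_of_ne_zero {h : ℝ → ℝ} (hh : Differentiable ℝ h)
    (hne : ∀ x, deriv h x ≠ 0) : (∀ x, deriv h x < 0) ∨ (∀ x, 0 < deriv h x) := by
  simpa using hasDerivWithinAt_forall_lt_or_forall_gt_of_forall_ne (s := Set.univ) convex_univ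
    (fun x _ => (hh x).hasDerivAt.hasDerivWithinAt) (fun x _ => hne x)

/-- If two differentiable real functions have derivatives that are equal in
square, and the second derivative function never vanishes, then the
derivatives agree everywhere or are opposite everywhere; consequently the
functions differ by a constant, possibly after a sign flip. -/
theorem deriv_sq_eq_imp_eq_or_neg
    (f g : ℝ → ℝ) (hf : Differentiable ℝ f) (hg : Differentiable ℝ g)
    (hsq : ∀ x : ℝ, (deriv f x) ^ 2 = (deriv g x) ^ 2)
    (hne : ∀ x : ℝ, deriv g x ≠ 0) :
    ((∀ x, deriv f x = deriv g x) ∨ (∀ x, deriv f x = -(deriv g x))) ∧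
      ∃ C : ℝ, (∀ x, f x = g x + C) ∨ (∀ x, f x = -g x + C) := by
  have hfne : ∀ x, deriv f x ≠ 0 := fun x h0 => by
    have h := hsq x
    rw [h0] at h
    exact hne x (pow_eq_zero_iff two_ne_zero |>.mp (by linarith))
  have key : (∀ x, deriv f x = deriv g x) ∨ (∀ x, deriv f x = -(deriv g x)) := by
    have hpt : ∀ x, deriv f x = deriv g x ∨ deriv f x = -deriv g x :=
      fun x => sq_eq_sq_iff_eq_or_eq_neg.mp (hsq x)
    rcases deriv_neg_or_pos_of_ne_zero hf hfne with h1 | h1 <;>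
    rcases deriv_neg_or_pos_of_ne_zero hg hne with h2 | h2
    · exact .inl fun x => (hpt x).resolve_right fun h => by linarith [h1 x, h2 x]
    · exact .inr fun x => (hpt x).resolve_left fun h => by linarith [h1 x, h2 x]
    · exact .inr fun x => (hpt x).resolve_left fun h => by linarith [h1 x, h2 x]
    · exact .inl fun x => (hpt x).resolve_right fun h => by linarith [h1 x, h2 x]
  refine ⟨key, ?_⟩
  rcases key with h | h
  · refine ⟨f 0 - g 0, .inl fun x => ?_⟩
    have hc := is_const_of_deriv_eq_zero (hf.sub hg)
      (fun y => by rw [deriv_sub (hf y) (hg y), h y, sub_self]) x 0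
    simp only [Pi.sub_apply] at hc
    linarith
  · refine ⟨f 0 + g 0, .inr fun x => ?_⟩
    have hc := is_const_of_deriv_eq_zero (hf.add hg)
      (fun y => by rw [deriv_add (hf y) (hg y), h y, neg_add_cancel]) x 0
    simp only [Pi.add_apply] at hc
    linarith
end
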